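/- Let I, J ⊆ ℝ be open intervals, s : I → J a strictly increasing continuous bijection with inverse t, and suppose t is absolutely continuous on J with density g₀ satisfying ∫_K g₀² dλ < ∞ for every compact K ⊆ J. Let μ = g·λ + κ (with κ ⊥ λ) be the Lebesgue decomposition of the Stieltjes measure μ of s, fix e ∈ I, and set s̄(x) := ∫_e^x g(u) du for x ∈ I. Then s̄ is strictly increasing and continuous on I, and its inverse t̄ on J̄ := s̄(I) is absolutely continuous with a density ḡ satisfying, for every compact interval J' ⊆ J̄, ∫_{J'} ḡ(x)² dx = ∫_{s(t̄(J'))} g₀(x)² dx < ∞. -/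

import Mathlib

open MeasureTheory Set

theorem exists_rat_between_mem_of_isOpen {I : Set ℝ} (hI : IsOpen I) {x : ℝ} (hx : x ∈ I) :
    ∃ p q : ℚ, (p : ℝ) ∈ I ∧ (q : ℝ) ∈ I ∧ (p : ℝ) < x ∧ x < q := by
  obtain ⟨l, u, hlu, hsub⟩ := mem_nhds_iff_exists_Ioo_subset.1 (hI.mem_nhds hx)
  obtain ⟨p, hp⟩ := exists_rat_btwn hlu.1
  obtain ⟨q, hq⟩ := exists_rat_btwn hlu.2
  exact ⟨p, q, hsub ⟨hp.1, hp.2.trans hlu.2⟩, hsub ⟨hlu.1.trans hq.1, hq.2⟩, hp.2, hq.1⟩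

theorem aemeasurable_of_strictMonoOn {I : Set ℝ} (hI : I.OrdConnected) {s : ℝ → ℝ}
    (hs : StrictMonoOn s I) {ν : Measure ℝ} (hνI : ν Iᶜ = 0) : AEMeasurable s ν := by
  have h := aemeasurable_restrict_of_monotoneOn (μ := ν) hI.measurableSet hs.monotoneOn
  rwa [Measure.restrict_eq_self_of_ae_mem (mem_ae_iff.2 hνI)] at h

theorem map_eq_volume_restrict_image {I : Set ℝ} (hI : IsOpen I) (hIc : I.OrdConnected)
    {s : ℝ → ℝ} (hs : StrictMonoOn s I) (hJ : (s '' I).OrdConnected) {ν : Measure ℝ}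
    (hνI : ν Iᶜ = 0)
    (hν : ∀ x ∈ I, ∀ y ∈ I, x ≤ y → ν (Ioc x y) = ENNReal.ofReal (s y - s x)) :
    ν.map s = volume.restrict (s '' I) := by
  have hsm : AEMeasurable s ν := aemeasurable_of_strictMonoOn hIc hs hνI
  have hae : ∀ᵐ x ∂ν, x ∈ I := mem_ae_iff.2 hνI
  have hIoc : ∀ c ∈ I, ∀ d ∈ I, c ≤ d →
      ν.map s (Ioc (s c) (s d)) = ENNReal.ofReal (s d - s c) := by
    intro c hc d hd hcd
    rw [Measure.map_apply_of_aemeasurable hsm measurableSet_Ioc, ← hν c hc d hd hcd]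
    apply measure_congr
    filter_upwards [hae] with x hx
    exact propext (and_congr (hs.lt_iff_lt hc hx) (hs.le_iff_le hx hd))
  have hloc : ∀ p ∈ I, ∀ q ∈ I, p < q → (ν.map s).restrict (Ioc (s p) (s q)) =
      (volume.restrict (s '' I)).restrict (Ioc (s p) (s q)) := by
    intro p hp q hq hpq
    have hsub : Icc (s p) (s q) ⊆ s '' I := hJ.out ⟨p, hp, rfl⟩ ⟨q, hq, rfl⟩
    have : IsFiniteMeasure ((ν.map s).restrict (Ioc (s p) (s q))) :=
      ⟨by rw [Measure.restrict_apply_univ, hIoc p hp q hq hpq.le]; exact ENNReal.ofReal_lt_top⟩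
    refine Measure.ext_of_Ioc _ _ fun a b _ => ?_
    rw [Measure.restrict_apply measurableSet_Ioc, Measure.restrict_apply measurableSet_Ioc,
      Ioc_inter_Ioc]
    rcases le_or_gt (min b (s q)) (max a (s p)) with h | h
    · rw [Ioc_eq_empty_of_le h]; simp
    · obtain ⟨c, hc, hcs⟩ := hsub ⟨le_max_right a (s p), h.le.trans (min_le_right _ _)⟩
      obtain ⟨d, hd, hds⟩ := hsub ⟨(le_max_right a (s p)).trans h.le, min_le_right b (s q)⟩
      change s c = max a (s p) at hcs
      change s d = min b (s q) at hds
      rw [← hcs, ← hds] at h ⊢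
      rw [hIoc c hc d hd ((hs.lt_iff_lt hc hd).1 h).le, Measure.restrict_apply measurableSet_Ioc,
        inter_eq_left.2 (Ioc_subset_Icc_self.trans (hJ.out ⟨c, hc, rfl⟩ ⟨d, hd, rfl⟩)),
        Real.volume_Ioc]
  have hcover : (⋃ r : {r : ℚ × ℚ // (r.1 : ℝ) ∈ I ∧ (r.2 : ℝ) ∈ I ∧ (r.1 : ℝ) < r.2},
      Ioc (s r.1.1) (s r.1.2)) = s '' I := by
    apply Subset.antisymm
    · refine iUnion_subset fun r => Ioc_subset_Icc_self.trans ?_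
      exact hJ.out ⟨_, r.2.1, rfl⟩ ⟨_, r.2.2.1, rfl⟩
    · rintro _ ⟨x, hx, rfl⟩
      obtain ⟨p, q, hp, hq, hpx, hxq⟩ := exists_rat_between_mem_of_isOpen hI hx
      exact mem_iUnion.2 ⟨⟨(p, q), hp, hq, hpx.trans hxq⟩, hs hp hx hpx, (hs hx hq hxq).le⟩
  have hglob := Measure.restrict_iUnion_congr.2 fun
    r : {r : ℚ × ℚ // (r.1 : ℝ) ∈ I ∧ (r.2 : ℝ) ∈ I ∧ (r.1 : ℝ) < r.2} =>
      hloc _ r.2.1 _ r.2.2.1 r.2.2.2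
  rw [hcover, Measure.restrict_restrict hJ.measurableSet, inter_self] at hglob
  rw [← hglob, Measure.restrict_eq_self_of_ae_mem]
  refine (ae_map_iff (p := (· ∈ s '' I)) hsm hJ.measurableSet).2 ?_
  filter_upwards [hae] with x hx using ⟨x, hx, rfl⟩

theorem map_eq_of_leftInverse_ae {s t : ℝ → ℝ} {ν ρ : Measure ℝ} (hs : AEMeasurable s ν)
    (ht : AEMeasurable t ρ) (hρ : ν.map s = ρ) (hts : ∀ᵐ x ∂ν, t (s x) = x) :
    ρ.map t = ν := by
  subst hρ
  rw [AEMeasurable.map_map_of_aemeasurable ht hs,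
    Measure.map_congr (f := t ∘ s) (g := id) hts, Measure.map_id]

theorem map_restrict_eq {t : ℝ → ℝ} {ν ρ : Measure ℝ} (ht : AEMeasurable t ρ)
    (hν : ρ.map t = ν) {A B : Set ℝ} (hA : MeasurableSet A)
    (hAB : ∀ᵐ y ∂ρ, t y ∈ A ↔ y ∈ B) : (ρ.restrict B).map t = ν.restrict A := by
  have h : ρ.restrict B = ρ.restrict (t ⁻¹' A) :=
    Measure.restrict_congr_set (by filter_upwards [hAB] with y hy using propext hy.symm)
  rw [h, ← hν, Measure.restrict_map_of_aemeasurable ht hA]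

theorem map_withDensity_eq {t : ℝ → ℝ} {ν ρ : Measure ℝ} [SFinite ρ] (ht : AEMeasurable t ρ)
    (hν : ρ.map t = ν) {G H : ℝ → ENNReal} (hH : AEMeasurable H ν)
    (hGH : ∀ᵐ y ∂ρ, G y = H (t y)) : (ρ.withDensity G).map t = ν.withDensity H := by
  ext A hA
  rw [Measure.map_apply_of_aemeasurable (ht.mono_ac (withDensity_absolutelyContinuous _ _)) hA,
    withDensity_apply', withDensity_apply _ hA, ← map_restrict_eq ht hν hA (B := t ⁻¹' A)
      (Filter.Eventually.of_forall fun _ => Iff.rfl), lintegral_map']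
  · exact lintegral_congr_ae (ae_restrict_of_ae hGH)
  · rw [map_restrict_eq ht hν hA (B := t ⁻¹' A) (Filter.Eventually.of_forall fun _ => Iff.rfl)]
    exact hH.restrict
  · exact ht.restrict

theorem ae_nonneg_of_integral_eq_sub {J : Set ℝ} (hJ : IsOpen J) (hJc : J.OrdConnected)
    {t g : ℝ → ℝ} (ht : MonotoneOn t J) (hg : LocallyIntegrableOn g J volume)
    (hdens : ∀ x ∈ J, ∀ y ∈ J, x ≤ y → t y - t x = ∫ u in x..y, g u) :
    ∀ᵐ x ∂volume.restrict J, 0 ≤ g x := by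
  rw [ae_restrict_iff' hJ.measurableSet]
  have h : ∀ r : ℚ × ℚ, ∀ᵐ x : ℝ, ((r.1 : ℝ) ∈ J ∧ (r.2 : ℝ) ∈ J) →
      (r.1 : ℝ) < x ∧ x < r.2 → 0 ≤ g x := by
    rintro ⟨p, q⟩
    by_cases hpq : ((p : ℝ) ∈ J ∧ (q : ℝ) ∈ J) ∧ (p : ℝ) ≤ q
    swap
    · refine Filter.Eventually.of_forall fun x h1 h2 => (hpq ⟨h1, ?_⟩).elim
      exact (h2.1.trans h2.2).le
    obtain ⟨⟨hp, hq⟩, hle⟩ := hpq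
    have hsub : Icc (p : ℝ) q ⊆ J := hJc.out hp hq
    have hint : IntervalIntegrable g volume p q := by
      apply IntegrableOn.intervalIntegrable
      rw [uIcc_of_le hle]
      exact hg.integrableOn_compact_subset hsub isCompact_Icc
    filter_upwards [hint.ae_hasDerivAt_integral] with x hx _ hpx
    rw [uIcc_of_le hle] at hx
    have hd := hx ⟨hpx.1.le, hpx.2.le⟩ p (left_mem_Icc.2 hle)
    have hmon : MonotoneOn (fun y => ∫ u in (p : ℝ)..y, g u) (Ioo (p : ℝ) q) := by
      intro y hy z hz hyz
      have hyJ := hsub (Ioo_subset_Icc_self hy)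
      have hzJ := hsub (Ioo_subset_Icc_self hz)
      change (∫ u in (p : ℝ)..y, g u) ≤ ∫ u in (p : ℝ)..z, g u
      rw [← hdens p hp y hyJ hy.1.le, ← hdens p hp z hzJ hz.1.le]
      linarith [ht hyJ hzJ hyz]
    have hnn := hmon.derivWithin_nonneg (x := x)
    rwa [derivWithin_of_isOpen isOpen_Ioo hpx, hd.deriv] at hnn
  filter_upwards [ae_all_iff.2 h] with x hx hxJ
  obtain ⟨p, q, hp, hq, hpx, hxq⟩ := exists_rat_between_mem_of_isOpen hJ hxJ
  exact hx (p, q) ⟨hp, hq⟩ ⟨hpx, hxq⟩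

theorem withDensity_ofReal_Ioc {J : Set ℝ} (hJc : J.OrdConnected) {g : ℝ → ℝ}
    (hg : LocallyIntegrableOn g J volume) (hg0 : ∀ᵐ x ∂volume.restrict J, 0 ≤ g x)
    {x y : ℝ} (hx : x ∈ J) (hy : y ∈ J) (hxy : x ≤ y) :
    (volume.restrict J).withDensity (fun u => ENNReal.ofReal (g u)) (Ioc x y) =
      ENNReal.ofReal (∫ u in x..y, g u) := by
  have hsub : Ioc x y ⊆ J := Ioc_subset_Icc_self.trans (hJc.out hx hy)
  rw [withDensity_apply _ measurableSet_Ioc, Measure.restrict_restrict measurableSet_Ioc,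
    inter_eq_left.2 hsub, intervalIntegral.integral_of_le hxy,
    ofReal_integral_eq_lintegral_ofReal]
  · exact (hg.integrableOn_compact_subset (hJc.out hx hy) isCompact_Icc).mono_set
      Ioc_subset_Icc_self
  · exact ae_mono (Measure.restrict_mono hsub le_rfl) hg0

theorem withDensity_restrict_compl {J : Set ℝ} (hJ : MeasurableSet J) (G : ℝ → ENNReal) :
    (volume.restrict J).withDensity G Jᶜ = 0 :=
  withDensity_absolutelyContinuous _ _ (by rw [Measure.restrict_apply hJ.compl]; simp)

theorem StrictMonoOn.image_Icc_eq {I : Set ℝ} (hI : I.OrdConnected) {f : ℝ → ℝ}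
    (hf : StrictMonoOn f I) (hfI : (f '' I).OrdConnected) {c d : ℝ} (hc : c ∈ I) (hd : d ∈ I) :
    f '' Icc c d = Icc (f c) (f d) := by
  apply Subset.antisymm
  · rintro _ ⟨x, hx, rfl⟩
    have hxI := hI.out hc hd hx
    exact ⟨(hf.le_iff_le hc hxI).2 hx.1, (hf.le_iff_le hxI hd).2 hx.2⟩
  · intro y hy
    obtain ⟨x, hx, rfl⟩ := hfI.out ⟨c, hc, rfl⟩ ⟨d, hd, rfl⟩ hy
    exact ⟨x, ⟨(hf.le_iff_le hc hx).1 hy.1, (hf.le_iff_le hx hd).1 hy.2⟩, rfl⟩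

theorem StrictMonoOn.isOpen_image {I : Set ℝ} (hI : IsOpen I) {f : ℝ → ℝ}
    (hf : StrictMonoOn f I) (hfI : (f '' I).OrdConnected) : IsOpen (f '' I) := by
  rw [isOpen_iff_mem_nhds]
  rintro _ ⟨x, hx, rfl⟩
  obtain ⟨p, q, hp, hq, hpx, hxq⟩ := exists_rat_between_mem_of_isOpen hI hx
  exact Filter.mem_of_superset (Icc_mem_nhds (hf hp hx hpx) (hf hx hq hxq))
    (hfI.out ⟨p, hp, rfl⟩ ⟨q, hq, rfl⟩)

theorem StrictMonoOn.of_leftInverse {I : Set ℝ} {f k : ℝ → ℝ} (hf : StrictMonoOn f I)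
    (hk : ∀ x ∈ I, k (f x) = x) : StrictMonoOn k (f '' I) := by
  rintro _ ⟨x, hx, rfl⟩ _ ⟨y, hy, rfl⟩ hxy
  rw [hk x hx, hk y hy]
  exact (hf.lt_iff_lt hx hy).1 hxy

theorem density_comp_eq_zero_ae_singular_and_absolutelyContinuous {s t : ℝ → ℝ}
    {ρ ν κ τ : Measure ℝ} [SFinite ρ] (hs : AEMeasurable s (ν + κ)) (ht : AEMeasurable t ρ)
    (hmap : (ν + κ).map s = ρ) (hmap' : ρ.map t = ν + κ) (hst : ∀ᵐ y ∂ρ, s (t y) = y)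
    {G : ℝ → ENNReal} (hG : AEMeasurable G ρ) (hτ : (ρ.withDensity G).map t = τ)
    (hsing : κ.MutuallySingular τ) :
    (∀ᵐ x ∂κ, G (s x) = 0) ∧ τ ≪ ν := by
  have hH : AEMeasurable (fun x => G (s x)) (ν + κ) := by
    rw [← hmap] at hG
    exact hG.comp_aemeasurable hs
  have hdec : τ = ν.withDensity (fun x => G (s x)) + κ.withDensity (fun x => G (s x)) := by
    rw [← hτ, map_withDensity_eq ht hmap' hH (by filter_upwards [hst] with y hy; rw [hy]),
      withDensity_add_measure]
  have hle : κ.withDensity (fun x => G (s x)) ≤ τ := hdec ▸ Measure.le_add_left le_rfl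
  have hzero : κ.withDensity (fun x => G (s x)) = 0 :=
    Measure.eq_zero_of_absolutelyContinuous_of_mutuallySingular hle.absolutelyContinuous
      (hsing.mono_ac (withDensity_absolutelyContinuous _ _) Measure.AbsolutelyContinuous.rfl)
  refine ⟨withDensity_eq_zero (hH.mono_measure (Measure.le_add_left le_rfl)) hzero, ?_⟩
  rw [hdec, hzero, add_zero]
  exact withDensity_absolutelyContinuous _ _

theorem integrableOn_and_integral_comp_eq {I : Set ℝ} (hI : I.OrdConnected) {s k tb : ℝ → ℝ}
    (hs : StrictMonoOn s I) (hsI : (s '' I).OrdConnected)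
    (hk : StrictMonoOn k I) (hkI : (k '' I).OrdConnected) (htb : ∀ x ∈ I, tb (k x) = x)
    {ν κ : Measure ℝ} (hνI : (ν + κ) Iᶜ = 0)
    (hmaps : (ν + κ).map s = volume.restrict (s '' I))
    (hmapk : ν.map k = volume.restrict (k '' I))
    {φ : ℝ → ℝ} (hφκ : ∀ᵐ x ∂κ, φ (s x) = 0) {c d : ℝ} (hc : c ∈ I) (hd : d ∈ I)
    (hφ : IntegrableOn φ (Icc (s c) (s d)) volume) :
    IntegrableOn (fun y => φ (s (tb y))) (Icc (k c) (k d)) volume ∧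
      ∫ y in Icc (k c) (k d), φ (s (tb y)) = ∫ y in Icc (s c) (s d), φ y := by
  have hνI' : ν Iᶜ = 0 := le_antisymm ((Measure.le_add_right le_rfl _).trans hνI.le) bot_le
  have hsm : AEMeasurable s (ν + κ) := aemeasurable_of_strictMonoOn hI hs hνI
  have hkm : AEMeasurable k ν := aemeasurable_of_strictMonoOn hI hk hνI'
  have htbm : AEMeasurable tb (volume.restrict (k '' I)) :=
    aemeasurable_of_strictMonoOn hkI (hk.of_leftInverse htb)
      (by rw [Measure.restrict_apply hkI.measurableSet.compl]; simp)
  have hmaptb : (volume.restrict (k '' I)).map tb = ν :=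
    map_eq_of_leftInverse_ae hkm htbm hmapk (Filter.mem_of_superset (mem_ae_iff.2 hνI') htb)
  have hsIcc : Icc (s c) (s d) ⊆ s '' I := hsI.out ⟨c, hc, rfl⟩ ⟨d, hd, rfl⟩
  have hkIcc : Icc (k c) (k d) ⊆ k '' I := hkI.out ⟨c, hc, rfl⟩ ⟨d, hd, rfl⟩
  have hmapsIcc : ((ν + κ).restrict (Icc c d)).map s = volume.restrict (Icc (s c) (s d)) := by
    rw [map_restrict_eq hsm hmaps measurableSet_Icc (B := Icc c d),
      Measure.restrict_restrict measurableSet_Icc, inter_eq_left.2 hsIcc]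
    filter_upwards [mem_ae_iff.2 hνI] with x hx
    exact and_congr (hs.le_iff_le hc hx) (hs.le_iff_le hx hd)
  have hmaptbIcc : (volume.restrict (Icc (k c) (k d))).map tb = ν.restrict (Icc c d) := by
    rw [← inter_eq_left.2 hkIcc, ← Measure.restrict_restrict measurableSet_Icc]
    refine map_restrict_eq htbm hmaptb measurableSet_Icc ?_
    filter_upwards [ae_restrict_mem hkI.measurableSet]
    rintro _ ⟨x, hx, rfl⟩
    rw [htb x hx]
    exact (and_congr (hk.le_iff_le hc hx) (hk.le_iff_le hx hd)).symm
  have htbmIcc : AEMeasurable tb (volume.restrict (Icc (k c) (k d))) :=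
    htbm.mono_measure (Measure.restrict_mono hkIcc le_rfl)
  rw [IntegrableOn, ← hmapsIcc] at hφ
  have hint : Integrable (fun x => φ (s x)) ((ν + κ).restrict (Icc c d)) :=
    (integrable_map_measure hφ.1 hsm.restrict).1 hφ
  have hval := integral_map hsm.restrict hφ.1
  rw [Measure.restrict_add] at hint hval
  have hintν := hint.left_of_add_measure
  rw [integral_add_measure hintν hint.right_of_add_measure,
    integral_eq_zero_of_ae (ae_restrict_of_ae hφκ), add_zero] at hval
  rw [← hmaptbIcc] at hintν
  refine ⟨(integrable_map_measure hintν.1 htbmIcc).1 hintν, ?_⟩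
  rw [← hmapsIcc, Measure.restrict_add, hval, ← hmaptbIcc]
  exact (integral_map htbmIcc hintν.1).symm

theorem MeasureTheory.LocallyIntegrableOn.intervalIntegrable_of_mem {I : Set ℝ} {g : ℝ → ℝ}
    (hg : LocallyIntegrableOn g I volume) (hI : I.OrdConnected) {x y : ℝ} (hx : x ∈ I)
    (hy : y ∈ I) : IntervalIntegrable g volume x y :=
  (hg.integrableOn_compact_subset (hI.uIcc_subset hx hy) isCompact_uIcc).intervalIntegrable

theorem MeasureTheory.LocallyIntegrableOn.continuousOn_primitive {I : Set ℝ} {g : ℝ → ℝ}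
    (hg : LocallyIntegrableOn g I volume) (hI : IsOpen I) (hIc : I.OrdConnected) {e : ℝ}
    (he : e ∈ I) : ContinuousOn (fun x => ∫ u in e..x, g u) I := by
  intro x hx
  obtain ⟨p, q, hp, hq, hpx, hxq⟩ := exists_rat_between_mem_of_isOpen hI hx
  have hc : ContinuousOn (fun y => ∫ u in (p : ℝ)..y, g u) (Icc (p : ℝ) q) := by
    rw [← uIcc_of_le (hpx.trans hxq).le]
    exact intervalIntegral.continuousOn_primitive_interval'
      (hg.intervalIntegrable_of_mem hIc hp hq) left_mem_uIcc
  have hca : ContinuousAt (fun y => (∫ u in e..(p : ℝ), g u) + ∫ u in (p : ℝ)..y, g u) x :=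
    continuousAt_const.add (hc.continuousAt (Icc_mem_nhds hpx hxq))
  refine (hca.congr ?_).continuousWithinAt
  filter_upwards [hI.mem_nhds hx] with y hy
  exact intervalIntegral.integral_add_adjacent_intervals
    (hg.intervalIntegrable_of_mem hIc he hp) (hg.intervalIntegrable_of_mem hIc hp hy)

/-- Let `s : I → J` be a strictly increasing continuous bijection whose inverse
`t` is absolutely continuous with locally square integrable density `g₀`. Let `μ = g·λ + κ`
(with `κ ⊥ λ`) be the Lebesgue decomposition of the Stieltjes measure `μ` of `s`, and set
`s̄(x) := ∫_e^x g`. Then `s̄` is strictly increasing and continuous on `I`, and every inverse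
`t̄` of `s̄` on `J̄ := s̄(I)` is absolutely continuous with a density `ḡ` satisfying, for every
compact interval `J' ⊆ J̄`, `∫_{J'} ḡ² dλ = ∫_{s(t̄(J'))} g₀² dλ < ∞`. -/
theorem stmt6 (I J : Set ℝ) (hIopen : IsOpen I) (hIconn : I.OrdConnected)
    (hJopen : IsOpen J) (hJconn : J.OrdConnected)
    (s t : ℝ → ℝ) (hmono : StrictMonoOn s I) (hcont : ContinuousOn s I)
    (hmaps : Set.MapsTo s I J) (hsurj : Set.SurjOn s I J)
    (hts : ∀ x ∈ I, t (s x) = x) (hst : ∀ y ∈ J, s (t y) = y)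
    (g₀ : ℝ → ℝ) (hg₀loc : LocallyIntegrableOn g₀ J volume)
    (hg₀dens : ∀ x ∈ J, ∀ y ∈ J, x ≤ y → t y - t x = ∫ u in x..y, g₀ u)
    (hg₀sq : ∀ K ⊆ J, IsCompact K → IntegrableOn (fun u => (g₀ u) ^ 2) K volume)
    (μ : Measure ℝ) (hμI : μ Iᶜ = 0)
    (hμ : ∀ x ∈ I, ∀ y ∈ I, x ≤ y → μ (Set.Ioc x y) = ENNReal.ofReal (s y - s x))
    (g : ℝ → ℝ) (hg0 : ∀ x, 0 ≤ g x) (hgloc : LocallyIntegrableOn g I volume)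
    (κ : Measure ℝ)
    (hdecomp : μ = (volume.restrict I).withDensity (fun x => ENNReal.ofReal (g x)) + κ)
    (hsing : κ.MutuallySingular (volume.restrict I))
    (e : ℝ) (he : e ∈ I) :
    StrictMonoOn (fun x => ∫ u in e..x, g u) I ∧
    ContinuousOn (fun x => ∫ u in e..x, g u) I ∧
    (∀ tb : ℝ → ℝ, (∀ x ∈ I, tb (∫ u in e..x, g u) = x) →
      ∃ gb : ℝ → ℝ,
        LocallyIntegrableOn gb ((fun x => ∫ u in e..x, g u) '' I) volume ∧
        (∀ x ∈ (fun x => ∫ u in e..x, g u) '' I, ∀ y ∈ (fun x => ∫ u in e..x, g u) '' I,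
          x ≤ y → tb y - tb x = ∫ u in x..y, gb u) ∧
        (∀ a b : ℝ, Set.Icc a b ⊆ (fun x => ∫ u in e..x, g u) '' I →
          IntegrableOn (fun x => (g₀ x) ^ 2) (s '' (tb '' Set.Icc a b)) volume ∧
          ∫ x in Set.Icc a b, (gb x) ^ 2 = ∫ x in s '' (tb '' Set.Icc a b), (g₀ x) ^ 2)) := by
  have himg : s '' I = J := Subset.antisymm hmaps.image_subset hsurj
  have htimg : t '' J = I := by
    rw [← himg, image_image]
    exact (image_congr hts).trans (image_id' I)
  have hmonot : StrictMonoOn t J := himg ▸ hmono.of_leftInverse hts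
  have hg₀nn : ∀ᵐ x ∂volume.restrict J, 0 ≤ g₀ x :=
    ae_nonneg_of_integral_eq_sub hJopen hJconn hmonot.monotoneOn hg₀loc hg₀dens
  have hg₀m : AEStronglyMeasurable g₀ (volume.restrict J) := hg₀loc.aestronglyMeasurable
  set ν : Measure ℝ := (volume.restrict I).withDensity (fun x => ENNReal.ofReal (g x))
  have hνI : ν Iᶜ = 0 := withDensity_restrict_compl hIopen.measurableSet _
  subst hdecomp
  have hsm : AEMeasurable s (ν + κ) := aemeasurable_of_strictMonoOn hIconn hmono hμI
  have htm : AEMeasurable t (volume.restrict J) :=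
    aemeasurable_of_strictMonoOn hJconn hmonot
      (by rw [Measure.restrict_apply hJopen.measurableSet.compl]; simp)
  have hmapμ : (ν + κ).map s = volume.restrict (s '' I) :=
    map_eq_volume_restrict_image hIopen hIconn hmono (himg ▸ hJconn) hμI hμ
  have hmapg₀ : ((volume.restrict J).withDensity fun u => ENNReal.ofReal (g₀ u)).map t =
      volume.restrict I := by
    rw [← htimg]
    refine map_eq_volume_restrict_image hJopen hJconn hmonot (htimg ▸ hIconn)
      (withDensity_restrict_compl hJopen.measurableSet _) fun x hx y hy hxy => ?_
    rw [withDensity_ofReal_Ioc hJconn hg₀loc hg₀nn hx hy hxy, hg₀dens x hx y hy hxy]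
  obtain ⟨hκ0, hac⟩ := density_comp_eq_zero_ae_singular_and_absolutelyContinuous hsm htm
    (himg ▸ hmapμ) (map_eq_of_leftInverse_ae hsm htm (himg ▸ hmapμ)
      (Filter.mem_of_superset (mem_ae_iff.2 hμI) hts))
    (Filter.mem_of_superset (ae_restrict_mem hJopen.measurableSet) hst)
    hg₀m.aemeasurable.ennreal_ofReal hmapg₀ hsing
  have hκ : ∀ᵐ x ∂κ, g₀ (s x) = 0 := by
    have hnn : ∀ᵐ x ∂(ν + κ), 0 ≤ g₀ (s x) := by
      rw [← himg, ← hmapμ] at hg₀nn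
      exact ae_of_ae_map (p := fun y => 0 ≤ g₀ y) hsm hg₀nn
    filter_upwards [hκ0, (ae_add_measure_iff.1 hnn).2] with x hx hx'
    exact le_antisymm (ENNReal.ofReal_eq_zero.1 hx) hx'
  set k : ℝ → ℝ := fun x => ∫ u in e..x, g u
  have hksub : ∀ x ∈ I, ∀ y ∈ I, k y - k x = ∫ u in x..y, g u := fun x hx y hy =>
    intervalIntegral.integral_interval_sub_left (hgloc.intervalIntegrable_of_mem hIconn he hy)
      (hgloc.intervalIntegrable_of_mem hIconn he hx)
  have hνIoc : ∀ x ∈ I, ∀ y ∈ I, x ≤ y → ν (Ioc x y) = ENNReal.ofReal (k y - k x) := by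
    intro x hx y hy hxy
    rw [hksub x hx y hy]
    exact withDensity_ofReal_Ioc hIconn hgloc (Filter.Eventually.of_forall hg0) hx hy hxy
  have hkmono : StrictMonoOn k I := by
    intro x hx y hy hxy
    by_contra! hle
    have h0 := hac ((hνIoc x hx y hy hxy.le).trans (ENNReal.ofReal_of_nonpos (sub_nonpos.2 hle)))
    rw [Measure.restrict_apply measurableSet_Ioc,
      inter_eq_left.2 (Ioc_subset_Icc_self.trans (hIconn.out hx hy)), Real.volume_Ioc,
      ENNReal.ofReal_eq_zero] at h0
    linarith
  have hkcont : ContinuousOn k I := hgloc.continuousOn_primitive hIopen hIconn he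
  refine ⟨hkmono, hkcont, fun tb htb => ?_⟩
  have hkI : (k '' I).OrdConnected := (hIconn.isPreconnected.image k hkcont).ordConnected
  have hmapk : ν.map k = volume.restrict (k '' I) :=
    map_eq_volume_restrict_image hIopen hIconn hkmono hkI hνI hνIoc
  have hsI : (s '' I).OrdConnected := himg ▸ hJconn
  have hsIcc : ∀ c ∈ I, ∀ d ∈ I, Icc (s c) (s d) ⊆ J := fun c hc d hd =>
    hJconn.out (hmaps hc) (hmaps hd)
  have hgb : ∀ c ∈ I, ∀ d ∈ I, IntegrableOn (fun y => g₀ (s (tb y))) (Icc (k c) (k d)) volume ∧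
      ∫ y in Icc (k c) (k d), g₀ (s (tb y)) = ∫ y in Icc (s c) (s d), g₀ y := fun c hc d hd =>
    integrableOn_and_integral_comp_eq hIconn hmono hsI hkmono hkI htb hμI hmapμ hmapk hκ hc hd
      (hg₀loc.integrableOn_compact_subset (hsIcc c hc d hd) isCompact_Icc)
  refine ⟨fun y => g₀ (s (tb y)), ?_, ?_, ?_⟩
  · rw [locallyIntegrableOn_iff (hkmono.isOpen_image hIopen hkI).isLocallyClosed]
    intro K hKI hK
    rcases K.eq_empty_or_nonempty with rfl | hne
    · exact integrableOn_empty
    obtain ⟨c, hc, hcK⟩ := hKI (hK.sInf_mem hne)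
    obtain ⟨d, hd, hdK⟩ := hKI (hK.sSup_mem hne)
    refine (hgb c hc d hd).1.mono_set fun y hy => ?_
    rw [hcK, hdK]
    exact ⟨csInf_le hK.bddBelow hy, le_csSup hK.bddAbove hy⟩
  · rintro _ ⟨c, hc, rfl⟩ _ ⟨d, hd, rfl⟩ hle
    have hscd : s c ≤ s d := (hmono.le_iff_le hc hd).2 ((hkmono.le_iff_le hc hd).1 hle)
    rw [intervalIntegral.integral_of_le hle, ← integral_Icc_eq_integral_Ioc, (hgb c hc d hd).2,
      integral_Icc_eq_integral_Ioc, ← intervalIntegral.integral_of_le hscd,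
      ← hg₀dens _ (hmaps hc) _ (hmaps hd) hscd, hts c hc, hts d hd]
    exact congrArg₂ _ (htb d hd) (htb c hc)
  · intro a b hab
    rcases lt_or_ge b a with hlt | hle
    · simp [Icc_eq_empty_of_lt hlt]
    obtain ⟨c, hc, rfl⟩ := hab (left_mem_Icc.2 hle)
    obtain ⟨d, hd, rfl⟩ := hab (right_mem_Icc.2 hle)
    have himgtb : tb '' Icc (k c) (k d) = Icc c d := by
      rw [← hkmono.image_Icc_eq hIconn hkI hc hd, image_image]
      exact (image_congr fun x hx => htb x (hIconn.out hc hd hx)).trans (image_id' _)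
    rw [himgtb, hmono.image_Icc_eq hIconn hsI hc hd]
    have hsq := hg₀sq _ (hsIcc c hc d hd) isCompact_Icc
    exact ⟨hsq, (integrableOn_and_integral_comp_eq (φ := fun u => g₀ u ^ 2) hIconn hmono hsI
      hkmono hkI htb hμI hmapμ hmapk (by filter_upwards [hκ] with x hx; simp [hx]) hc hd hsq).2⟩
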